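/- arXiv:2309.02009 — 2 statements merged into one kernel-verified Lean document; each statement's English description precedes it below -/
import Mathlib

section
/- Let Ω be a finite nonempty type of interpretations, where a formula is identified with its set of models (a subset of Ω). Let ∘ : Set Ω → Set Ω → Set Ω be a belief revision operator, written K ∘ A. Then ∘ satisfies the KM postulates for every belief base K ⊆ Ω — (KM1) K∘A ⊆ A; (KM2) if K ∩ A is nonempty then K∘A = K ∩ A; (KM3) if A is nonempty then K∘A is nonempty; (KM5) (K∘A) ∩ B ⊆ K∘(A ∩ B); (KM6) if (K∘A) ∩ B is nonempty then K∘(A ∩ B) ⊆ (K∘A) ∩ B — if and only if there exists an assignment sending each K ⊆ Ω to a total preorder ≼_K on Ω that is faithful to K and such that for every K and every A ⊆ Ω, K∘A = min(A, ≼_K). -/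
/-!
The preorder attached to `K` is read off from revision by pairs: `a ≼ b` iff `a ∈ K ∘ {a, b}`.
For fixed `K`, KM5 and KM6 together say that `K ∘ B = (K ∘ A) ∩ B` whenever `B ⊆ A` meets
`K ∘ A`, the usual consistency condition on a choice function. Passing between a set and its
pairs by this condition gives both transitivity (`pairPre_trans`, via the triple `{a, b, c}`) and
the identity `K ∘ A = min(A, ≼)` (`eq_min_pairPre`). Totality is KM3 on pairs, and faithfulness is
KM2 on pairs. Conversely, minimization satisfies the postulates; finiteness of `Ω` enters only in
KM3, through the existence of minimal elements (`exists_least_of_total`).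
-/

/-- The relation revealed by a choice function `r` on pairs: `a` is among the elements chosen
from `{a, b}`. -/
def pairPre {Ω : Type*} (r : Set Ω → Set Ω) (a b : Ω) : Prop := a ∈ r {a, b}

section Choice

variable {Ω : Type*} {r : Set Ω → Set Ω}

/-- KM5 for a subset: an element chosen from `A` is chosen from every `B ⊆ A` containing it. -/
lemma mem_of_subset (h5 : ∀ A B : Set Ω, r A ∩ B ⊆ r (A ∩ B)) {A B : Set Ω} (hBA : B ⊆ A)
    {x : Ω} (hx : x ∈ r A) (hxB : x ∈ B) : x ∈ r B := by
  have h := h5 A B ⟨hx, hxB⟩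
  rwa [Set.inter_eq_right.mpr hBA] at h

/-- KM6 for a subset: if `B ⊆ A` contains an element chosen from `A`, everything chosen from `B`
is chosen from `A`. -/
lemma mem_of_superset (h6 : ∀ A B : Set Ω, (r A ∩ B).Nonempty → r (A ∩ B) ⊆ r A ∩ B)
    {A B : Set Ω} (hBA : B ⊆ A) {x y : Ω} (hx : x ∈ r A) (hxB : x ∈ B) (hy : y ∈ r B) :
    y ∈ r A := by
  have h := h6 A B ⟨x, hx, hxB⟩
  rw [Set.inter_eq_right.mpr hBA] at h
  exact (h hy).1

lemma pairPre_total (h1 : ∀ A, r A ⊆ A) (h3 : ∀ A : Set Ω, A.Nonempty → (r A).Nonempty)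
    (a b : Ω) : pairPre r a b ∨ pairPre r b a := by
  obtain ⟨x, hx⟩ := h3 {a, b} ⟨a, by simp⟩
  rcases h1 _ hx with rfl | hxb
  · exact Or.inl hx
  · obtain rfl : x = b := hxb
    right
    rwa [pairPre, Set.pair_comm]

lemma pairPre_trans (h1 : ∀ A, r A ⊆ A) (h3 : ∀ A : Set Ω, A.Nonempty → (r A).Nonempty)
    (h5 : ∀ A B : Set Ω, r A ∩ B ⊆ r (A ∩ B))
    (h6 : ∀ A B : Set Ω, (r A ∩ B).Nonempty → r (A ∩ B) ⊆ r A ∩ B) {a b c : Ω}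
    (hab : pairPre r a b) (hbc : pairPre r b c) : pairPre r a c := by
  have sab : ({a, b} : Set Ω) ⊆ {a, b, c} := by grind
  have sbc : ({b, c} : Set Ω) ⊆ {a, b, c} := by grind
  have sac : ({a, c} : Set Ω) ⊆ {a, b, c} := by grind
  -- It suffices that `a` is chosen from the triple; some element is, and the choice of
  -- `c` forces that of `b`, which forces that of `a`.
  suffices ha : a ∈ r {a, b, c} from mem_of_subset h5 sac ha (by simp)
  have of_b (hb : b ∈ r {a, b, c}) : a ∈ r {a, b, c} :=
    mem_of_superset h6 sab hb (by simp) hab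
  obtain ⟨x, hx⟩ := h3 {a, b, c} ⟨a, by simp⟩
  obtain rfl | rfl | rfl : x = a ∨ x = b ∨ x = c := by simpa using h1 _ hx
  · exact hx
  · exact of_b hx
  · exact of_b (mem_of_superset h6 sbc hx (by simp) hbc)

lemma eq_min_pairPre (h1 : ∀ A, r A ⊆ A) (h3 : ∀ A : Set Ω, A.Nonempty → (r A).Nonempty)
    (h5 : ∀ A B : Set Ω, r A ∩ B ⊆ r (A ∩ B))
    (h6 : ∀ A B : Set Ω, (r A ∩ B).Nonempty → r (A ∩ B) ⊆ r A ∩ B) (A : Set Ω) :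
    r A = {a ∈ A | ∀ b ∈ A, pairPre r a b} := by
  ext a
  constructor
  · intro ha
    exact ⟨h1 A ha, fun b hb =>
      mem_of_subset h5 (Set.pair_subset (h1 A ha) hb) ha (by simp)⟩
  · rintro ⟨haA, hmin⟩
    -- Compare `a` with some element `c` that is chosen from `A`.
    obtain ⟨c, hc⟩ := h3 A ⟨a, haA⟩
    exact mem_of_superset h6 (Set.pair_subset haA (h1 A hc)) hc (by simp) (hmin c (h1 A hc))

end Choice

lemma exists_least_of_total {Ω : Type*} [Finite Ω] {le : Ω → Ω → Prop} (hrefl : ∀ a, le a a)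
    (htrans : ∀ a b c, le a b → le b c → le a c) (htotal : ∀ a b, le a b ∨ le b a) {A : Set Ω} (hA : A.Nonempty) :
    ∃ a ∈ A, ∀ b ∈ A, le a b := by
  let _ : Preorder Ω :=
    { le := le, le_refl := hrefl, le_trans := htrans }
  obtain ⟨a, ha⟩ := A.toFinite.exists_minimal hA
  exact ⟨a, ha.prop, fun b hb => (htotal a b).elim id fun hba => ha.le_of_le hb hba⟩

/-- KM representation theorem (semantic form): a revision operator
`rev : Set Ω → Set Ω → Set Ω` (written `K ∘ A`) satisfies the KM postulates
(KM1, KM2, KM3, KM5, KM6) for every belief base `K` iff there is an assignment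
of a faithful total preorder `≼_K` to each `K` such that
`K ∘ A = min(A, ≼_K)` for all `A`. -/
theorem km_representation {Ω : Type*} [Fintype Ω] [Nonempty Ω]
    (rev : Set Ω → Set Ω → Set Ω) :
    ((∀ K A : Set Ω, rev K A ⊆ A) ∧                                     -- KM1
     (∀ K A : Set Ω, (K ∩ A).Nonempty → rev K A = K ∩ A) ∧             -- KM2
     (∀ K A : Set Ω, A.Nonempty → (rev K A).Nonempty) ∧                -- KM3
     (∀ K A B : Set Ω, rev K A ∩ B ⊆ rev K (A ∩ B)) ∧                  -- KM5
     (∀ K A B : Set Ω, (rev K A ∩ B).Nonempty →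
        rev K (A ∩ B) ⊆ rev K A ∩ B))                                  -- KM6
    ↔
    (∃ pre : Set Ω → Ω → Ω → Prop,
      ∀ K : Set Ω,
        -- `pre K` is a total preorder
        (Reflexive (pre K) ∧ Transitive (pre K) ∧
          (∀ a b : Ω, pre K a b ∨ pre K b a)) ∧
        -- faithfulness to `K`
        (∀ ω ω' : Ω, ω ∈ K → ω' ∈ K → pre K ω ω' ∧ pre K ω' ω) ∧
        (∀ ω ω' : Ω, ω ∈ K → ω' ∉ K → pre K ω ω' ∧ ¬ pre K ω' ω) ∧
        -- revision is minimization
        (∀ A : Set Ω, rev K A = {ω ∈ A | ∀ ω' ∈ A, pre K ω ω'})) := by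
  constructor
  · rintro ⟨h1, h2, h3, h5, h6⟩
    refine ⟨fun K => pairPre (rev K), fun K => ⟨⟨fun a => ?_, fun a b c => ?_, ?_⟩, ?_, ?_, ?_⟩⟩
    · exact (pairPre_total (h1 K) (h3 K) a a).elim id id
    · exact pairPre_trans (h1 K) (h3 K) (h5 K) (h6 K)
    · exact pairPre_total (h1 K) (h3 K)
    · intro a b ha hb
      simp only [pairPre]
      rw [h2 K {a, b} ⟨a, ha, by simp⟩, h2 K {b, a} ⟨a, ha, by simp⟩]
      simp [ha, hb]
    · intro a b ha hb
      simp only [pairPre]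
      rw [h2 K {a, b} ⟨a, ha, by simp⟩, h2 K {b, a} ⟨a, ha, by simp⟩]
      simp [ha, hb]
    · exact eq_min_pairPre (h1 K) (h3 K) (h5 K) (h6 K)
  · rintro ⟨pre, hpre⟩
    refine ⟨fun K A => ?_, fun K A => ?_, fun K A hA => ?_, fun K A B => ?_, fun K A B => ?_⟩ <;>
      obtain ⟨⟨hrefl, htrans, htotal⟩, hK, hK', hmin⟩ := hpre K
    · rw [hmin]
      exact Set.sep_subset _ _
    · rintro ⟨k, hkK, hkA⟩
      rw [hmin]
      ext x
      constructor
      · rintro ⟨hxA, hx⟩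
        refine ⟨?_, hxA⟩
        -- Outside `K`, the point `x` would lie strictly above `k`.
        by_contra hxK
        exact (hK' k x hkK hxK).2 (hx k hkA)
      · rintro ⟨hxK, hxA⟩
        refine ⟨hxA, fun y _ => ?_⟩
        by_cases hyK : y ∈ K
        · exact (hK x y hxK hyK).1
        · exact (hK' x y hxK hyK).1
    · rw [hmin]
      exact exists_least_of_total hrefl (fun _ _ _ => @htrans _ _ _) htotal hA
    · rw [hmin, hmin]
      rintro x ⟨⟨hxA, hx⟩, hxB⟩
      exact ⟨⟨hxA, hxB⟩, fun y hy => hx y hy.1⟩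
    · rw [hmin, hmin]
      rintro ⟨y, ⟨hyA, hy⟩, hyB⟩ x ⟨⟨hxA, hxB⟩, hx⟩
      exact ⟨⟨hxA, fun z hz => htrans (hx y ⟨hyA, hyB⟩) (hy z hz)⟩, hxB⟩
end

section
/- (The shortest jokes.) There exist a finite nonempty type Ω, a total preorder ≼ on Ω, sets K = min(Ω, ≼), and α, β, α' ⊆ Ω with α not contained in α', such that for the revision operator defined by K∘A = min(A, ≼): the statement (α, β) is potentially funny for (K, ∘) — i.e., K∘α is nonempty, (K∘α) ∩ (K∘(α ∩ β)) = ∅, K∘β is nonempty, and K∘β ⊆ α — but the statement (α ∩ α', β) is not potentially funny for (K, ∘). -/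
/-- The shortest jokes are the best: there is a listener `(K, ∘)` induced by a
total preorder `≼` (with `K = min(Ω, ≼)` and `K∘A = min(A, ≼)`) and formulas
`α, β, α'` with `α ⊄ α'` such that `(α, β)` is potentially funny but
`(α ∩ α', β)` is not. -/
theorem shortest_jokes :
    ∃ (Ω : Type) (_ : Fintype Ω) (_ : Nonempty Ω)
      (pre : Ω → Ω → Prop) (K : Set Ω) (rev : Set Ω → Set Ω)
      (α β α' : Set Ω),
      Reflexive pre ∧ Transitive pre ∧ (∀ a b : Ω, pre a b ∨ pre b a) ∧
      K = {ω : Ω | ∀ ω' : Ω, pre ω ω'} ∧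
      (∀ A : Set Ω, rev A = {ω ∈ A | ∀ ω' ∈ A, pre ω ω'}) ∧
      ¬ α ⊆ α' ∧
      -- `(α, β)` is potentially funny
      ((rev α).Nonempty ∧ rev α ∩ rev (α ∩ β) = ∅ ∧
        (rev β).Nonempty ∧ rev β ⊆ α) ∧
      -- `(α ∩ α', β)` is not potentially funny
      ¬ (((rev (α ∩ α')).Nonempty ∧
            rev (α ∩ α') ∩ rev ((α ∩ α') ∩ β) = ∅) ∧
          ((rev β).Nonempty ∧ rev β ⊆ α ∩ α')) := by
  -- Two worlds with `false` strictly more plausible than `true`. The opening `α = ⊤` makes the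
  -- listener believe `false`, so the punchline `β = {true}` surprises; strengthening the opening
  -- by `α' = {true}` gives the punchline away, and surprise (not revelation) is lost.
  refine ⟨Bool, inferInstance, inferInstance, (· ≤ ·), _,
    fun A => {ω ∈ A | ∀ ω' ∈ A, ω ≤ ω'}, Set.univ, {true}, {true},
    fun a => le_refl a, fun a b c => le_trans, le_total, rfl, fun _ => rfl, ?_,
    ⟨⟨false, ?_⟩, ?_, ⟨true, ?_⟩, ?_⟩, ?_⟩
  · intro h
    simpa using h (Set.mem_univ false)
  · simp
  · ext x
    cases x <;> simp
  · simp
  · exact Set.subset_univ _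
  · rintro ⟨⟨-, h⟩, -⟩
    have ht : true ∈ (∅ : Set Bool) := by
      rw [← h]
      simp
    exact ht
end
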